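/- arXiv:2111.14129 — 9 statements merged into one kernel-verified Lean document; each statement's English description precedes it below -/
import Mathlib

section
/- Let (S, ≼) be a partially ordered set and n : ℕ. Then the following are equivalent: (a) there exists a family L : Fin n → (S → S → Prop) of linear orders on S, each extending ≼, such that for all x y : S, x ≼ y ↔ ∀ i, L i x y; (b) for every finite subset F of S there exists a family of n linear orders on F, each extending the restriction of ≼ to F, whose intersection equals the restriction of ≼ to F (i.e., for all x y ∈ F, x ≼ y ↔ all n linear orders hold of (x,y)). -/
/-!
The substantial direction is a compactness argument. The finite subsets of `S`, directed by
inclusion, carry an ultrafilter `U` finer than `atTop`; every given finite set of points lies in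
`U`-almost every `F`. Given a realizer of size `n` on each `F`, declare `L i x y` to hold when
the `i`-th order on `F` relates `x` to `y` for `U`-almost every `F`. Each requirement on a realizer
involves at most three points, so it passes to this limit: totality because `U` is an ultrafilter,
and the recovery of `≤` from the `n` orders because `n` is finite.
-/

/-- Compactness for order dimension: a poset has order dimension at most `n`
iff every finite subposet has order dimension at most `n`. -/
theorem stmt_2 {S : Type*} [PartialOrder S] (n : ℕ) :
    (∃ L : Fin n → S → S → Prop,
      (∀ i, IsLinearOrder S (L i)) ∧
      (∀ i, ∀ x y : S, x ≤ y → L i x y) ∧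
      (∀ x y : S, x ≤ y ↔ ∀ i, L i x y)) ↔
    (∀ F : Finset S, ∃ L : Fin n → F → F → Prop,
      (∀ i, IsLinearOrder F (L i)) ∧
      (∀ i, ∀ x y : F, (x : S) ≤ (y : S) → L i x y) ∧
      (∀ x y : F, (x : S) ≤ (y : S) ↔ ∀ i, L i x y)) := by
  classical
  constructor
  · rintro ⟨L, hlin, hext, hreal⟩ F
    refine ⟨fun i x y => L i x y, fun i => ?_, fun i x y => hext i x y, fun x y => hreal x y⟩
    have := hlin i
    exact
      { refl := fun x => refl_of (L i) (x : S)
        trans := fun x y z => trans_of (L i) (a := (x : S)) (b := y) (c := z)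
        antisymm := fun x y hxy hyx => Subtype.ext (antisymm_of (L i) hxy hyx)
        total := fun x y => total_of (L i) (x : S) y }
  · intro h
    choose L hlin hext hreal using h
    let U : Ultrafilter (Finset S) := Ultrafilter.of Filter.atTop
    have hmem (x : S) : ∀ᶠ F in (U : Filter (Finset S)), x ∈ F := by
      refine (Ultrafilter.of_le Filter.atTop) ?_
      filter_upwards [Filter.eventually_ge_atTop {x}] with F hF
      exact hF (Finset.mem_singleton_self x)
    let M : Fin n → S → S → Prop := fun i x y =>
      ∀ᶠ F in (U : Filter (Finset S)), ∃ (hx : x ∈ F) (hy : y ∈ F), L F i ⟨x, hx⟩ ⟨y, hy⟩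
    have hM (i : Fin n) (x y : S) (hxy : x ≤ y) : M i x y := by
      filter_upwards [hmem x, hmem y] with F hx hy
      exact ⟨hx, hy, hext F i _ _ hxy⟩
    refine ⟨M, fun i => ?_, hM, fun x y => ⟨fun hxy i => hM i x y hxy, fun hxy => ?_⟩⟩
    · exact
        { refl := fun x => hM i x x le_rfl
          trans := fun x y z hxy hyz => by
            filter_upwards [hxy, hyz] with F ⟨hx, hy, h₁⟩ ⟨_, hz, h₂⟩
            have := hlin F i
            exact ⟨hx, hz, trans_of (L F i) h₁ h₂⟩
          antisymm := fun x y hxy hyx => by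
            obtain ⟨F, ⟨hx, hy, h₁⟩, ⟨_, _, h₂⟩⟩ := (hxy.and hyx).exists
            have := hlin F i
            exact congrArg Subtype.val (antisymm_of (L F i) h₁ h₂)
          total := fun x y => by
            refine Ultrafilter.eventually_or.mp ?_
            filter_upwards [hmem x, hmem y] with F hx hy
            have := hlin F i
            exact (total_of (L F i) ⟨x, hx⟩ ⟨y, hy⟩).imp
              (fun h => ⟨hx, hy, h⟩) (fun h => ⟨hy, hx, h⟩) }
    -- Membership of `x` and `y` in `F` is requested separately: for `n = 0` there is no `M i`.
    · obtain ⟨F, ⟨hx, hy⟩, hF⟩ :=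
        (((hmem x).and (hmem y)).and (Filter.eventually_all.mpr hxy)).exists
      exact (hreal F ⟨x, hx⟩ ⟨y, hy⟩).mpr fun i => (hF i).2.2
end

section
/- Let (S, ≼) be a partially ordered set and d : ℕ with d ≥ 1. Suppose there exists a family of d linear orders on S, each extending ≼, whose intersection equals ≼ (for all x y, x ≼ y ↔ all d of them hold), but there is no such family of d − 1 linear orders. Then there exists a finite subset F of S such that there is no family of d − 1 linear orders on F, each extending the restriction of ≼ to F, whose intersection equals the restriction of ≼ to F. -/
/-!
The proof is a compactness argument by ultraproducts. Suppose every finite `F ⊆ S` had a realizer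
`L F` by `d - 1` linear orders. Choose an ultrafilter `U` on `Finset S` containing every cone
`{F | F₀ ⊆ F}`, and let `x` precede `y` in the `i`-th limit order when it does so in `L F i` for
`U`-almost all `F`. Any finitely many points of `S` lie in `U`-almost every `F`, so the axioms of a
linear order pass to the limit, totality because `U` is an ultrafilter. The limit orders realize the
order of `S` because a finite conjunction over `i` commutes with `U`-almost all `F`. This
contradicts the assumption that `S` has no realizer of size `d - 1`.
-/


/-- If a poset has finite order dimension `d ≥ 1` (realizable by `d` linear
extensions but not by `d - 1`), then some finite subposet is also not
realizable by `d - 1` linear extensions. -/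
theorem stmt_3 {S : Type*} [PartialOrder S] (d : ℕ) (hd : 1 ≤ d)
    (hreal : ∃ L : Fin d → S → S → Prop,
      (∀ i, IsLinearOrder S (L i)) ∧
      (∀ i, ∀ x y : S, x ≤ y → L i x y) ∧
      (∀ x y : S, x ≤ y ↔ ∀ i, L i x y))
    (hnot : ¬ ∃ L : Fin (d - 1) → S → S → Prop,
      (∀ i, IsLinearOrder S (L i)) ∧
      (∀ i, ∀ x y : S, x ≤ y → L i x y) ∧
      (∀ x y : S, x ≤ y ↔ ∀ i, L i x y)) :
    ∃ F : Finset S, ¬ ∃ L : Fin (d - 1) → F → F → Prop,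
      (∀ i, IsLinearOrder F (L i)) ∧
      (∀ i, ∀ x y : F, (x : S) ≤ (y : S) → L i x y) ∧
      (∀ x y : F, (x : S) ≤ (y : S) ↔ ∀ i, L i x y) := by
  by_contra! hF
  choose L hlin hext hiff using hF
  let U : Ultrafilter (Finset S) := Ultrafilter.of Filter.atTop
  have hmem : ∀ x : S, ∀ᶠ F in (U : Filter (Finset S)), x ∈ F := fun x =>
    Ultrafilter.of_le Filter.atTop ((Filter.eventually_ge_atTop {x}).mono fun F h =>
      h (Finset.mem_singleton_self x))
  have hle : ∀ i, ∀ x y : S, x ≤ y →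
      ∀ᶠ F in (U : Filter (Finset S)), ∃ (hx : x ∈ F) (hy : y ∈ F), L F i ⟨x, hx⟩ ⟨y, hy⟩ := by
    intro i x y hxy
    filter_upwards [hmem x, hmem y] with F hx hy
    exact ⟨hx, hy, hext F i ⟨x, hx⟩ ⟨y, hy⟩ hxy⟩
  refine hnot ⟨fun i x y => ∀ᶠ F in (U : Filter (Finset S)),
    ∃ (hx : x ∈ F) (hy : y ∈ F), L F i ⟨x, hx⟩ ⟨y, hy⟩, fun i => ?_, hle,
    fun x y => ⟨fun hxy i => hle i x y hxy, fun h => ?_⟩⟩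
  · refine { refl := fun x => hle i x x le_rfl, trans := ?_, antisymm := ?_, total := ?_ }
    · intro x y z hxy hyz
      filter_upwards [hxy, hyz] with F ⟨hx, hy, h₁⟩ ⟨_, hz, h₂⟩
      exact ⟨hx, hz, (hlin F i).trans _ _ _ h₁ h₂⟩
    · intro x y hxy hyx
      obtain ⟨F, ⟨hx, hy, h₁⟩, ⟨_, _, h₂⟩⟩ := (hxy.and hyx).exists
      exact congrArg Subtype.val ((hlin F i).antisymm _ _ h₁ h₂)
    · intro x y
      rw [← Ultrafilter.eventually_or]
      filter_upwards [hmem x, hmem y] with F hx hy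
      exact ((hlin F i).total ⟨x, hx⟩ ⟨y, hy⟩).imp (fun h => ⟨hx, hy, h⟩) fun h => ⟨hy, hx, h⟩
  · -- Membership of `x` and `y` in `F` is not implied by `h` when `d - 1 = 0`.
    obtain ⟨F, hall, hx, hy⟩ :=
      ((Filter.eventually_all.2 h).and ((hmem x).and (hmem y))).exists
    exact (hiff F ⟨x, hx⟩ ⟨y, hy⟩).2 fun i => (hall i).2.2
end

section
/- Let (S, ≼) be a partially ordered set. Then the following are equivalent: (a) for every n : ℕ there is no family of n linear orders on S, each extending ≼, whose intersection equals ≼; (b) for every n : ℕ there exists a finite subset F of S such that there is no family of n linear orders on F, each extending the restriction of ≼ to F, whose intersection equals the restriction of ≼ to F. -/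
/-!
The equivalence holds for each `n` separately: `S` has a realizer of size `n` if and only if every
finite subset of `S` has one. A realizer of `S` restricts to every subset. The converse is a
compactness argument: choose realizers of all finite `F`, fix an ultrafilter on `Finset S` finer
than `atTop`, and let `L i x y` mean that `x` precedes `y` in the `i`-th order on `F` for almost
all `F` (every pair lies in almost all `F`). The linear order axioms pass to this limit
(`isLinearOrder_limit`), totality because an ultrafilter is prime for disjunctions. Since there are
only finitely many indices `i`, a pair related by all limit orders is related by all `n` orders on
one common `F`, hence in the poset.
-/

open Filter in
/-- The limit along an ultrafilter `U` of linear orders `R F` on the finite sets `F` is a linear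
order, provided that every point belongs to `U`-almost every `F`. -/
theorem isLinearOrder_limit {S : Type*} (U : Ultrafilter (Finset S))
    (hU : ∀ x, ∀ᶠ F in (U : Filter (Finset S)), x ∈ F)
    (R : ∀ F : Finset S, F → F → Prop) (hR : ∀ F : Finset S, IsLinearOrder F (R F)) :
    IsLinearOrder S (fun x y => ∀ᶠ F in (U : Filter (Finset S)),
      ∃ (hx : x ∈ F) (hy : y ∈ F), R F ⟨x, hx⟩ ⟨y, hy⟩) where
  refl x := (hU x).mono fun F hx => ⟨hx, hx, (hR F).refl _⟩
  trans x y z hxy hyz := by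
    filter_upwards [hxy, hyz] with F ⟨hx, _, h⟩ ⟨_, hz, h'⟩
    exact ⟨hx, hz, (hR F).trans _ _ _ h h'⟩
  antisymm x y hxy hyx := by
    obtain ⟨F, ⟨hx, hy, h⟩, ⟨_, _, h'⟩⟩ := (hxy.and hyx).exists
    exact congrArg Subtype.val ((hR F).antisymm _ _ h h')
  total x y := by
    rw [← Ultrafilter.eventually_or]
    filter_upwards [hU x, hU y] with F hx hy
    exact ((hR F).total ⟨x, hx⟩ ⟨y, hy⟩).imp (fun h => ⟨hx, hy, h⟩) (fun h => ⟨hy, hx, h⟩)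


/-- A poset has infinite order dimension iff it contains finite subposets of
arbitrarily large order dimension. -/
theorem stmt_4 {S : Type*} [PartialOrder S] :
    (∀ n : ℕ, ¬ ∃ L : Fin n → S → S → Prop,
      (∀ i, IsLinearOrder S (L i)) ∧
      (∀ i, ∀ x y : S, x ≤ y → L i x y) ∧
      (∀ x y : S, x ≤ y ↔ ∀ i, L i x y)) ↔
    (∀ n : ℕ, ∃ F : Finset S, ¬ ∃ L : Fin n → F → F → Prop,
      (∀ i, IsLinearOrder F (L i)) ∧
      (∀ i, ∀ x y : F, (x : S) ≤ (y : S) → L i x y) ∧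
      (∀ x y : F, (x : S) ≤ (y : S) ↔ ∀ i, L i x y)) := by
  refine forall_congr' fun n => ?_
  rw [← not_forall, not_iff_not]
  constructor
  · rintro ⟨L, hlin, hext, hreal⟩ F
    refine ⟨fun i x y => L i x y, fun i => ?_, fun i x y => hext i x y, fun x y => hreal x y⟩
    exact
      { refl := fun x => (hlin i).refl _
        trans := fun x y z => (hlin i).trans _ _ _
        antisymm := fun x y h h' => Subtype.ext ((hlin i).antisymm _ _ h h')
        total := fun x y => (hlin i).total _ _ }
  · intro h
    choose R hlin hext hreal using h
    classical
    let U : Ultrafilter (Finset S) := Ultrafilter.of Filter.atTop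
    have hU : ∀ x, ∀ᶠ F in (U : Filter (Finset S)), x ∈ F := fun x =>
      Ultrafilter.of_le _ <| (Filter.eventually_ge_atTop {x}).mono fun F hF =>
        hF (Finset.mem_singleton_self x)
    let L : Fin n → S → S → Prop := fun i x y => ∀ᶠ F in (U : Filter (Finset S)),
      ∃ (hx : x ∈ F) (hy : y ∈ F), R F i ⟨x, hx⟩ ⟨y, hy⟩
    have hL : ∀ i x y, x ≤ y → L i x y := fun i x y hxy => by
      filter_upwards [hU x, hU y] with F hx hy
      exact ⟨hx, hy, hext F i _ _ hxy⟩
    refine ⟨L, fun i => isLinearOrder_limit U hU (fun F => R F i) fun F => hlin F i, hL,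
      fun x y => ⟨fun hxy i => hL i x y hxy, fun hxy => ?_⟩⟩
    -- Membership of `x` and `y` is required separately: for `n = 0` it does not follow from `hxy`.
    obtain ⟨F, hF, hx, hy⟩ := ((Filter.eventually_all.2 hxy).and ((hU x).and (hU y))).exists
    exact (hreal F ⟨x, hx⟩ ⟨y, hy⟩).2 fun i => (hF i).2.2
end

section
/- Let s, t ∈ ℝ with 0 < s < t < 1, and define the 2-outcome EVMs on the classical bit A(s,s²) := ((s,s²),(1−s,1−s²)) and A(t,t²) := ((t,t²),(1−t,1−t²)). Then A(s,s²) and A(t,t²) are incomparable with respect to post-processing: neither A(s,s²) ≼post A(t,t²) nor A(t,t²) ≼post A(s,s²) holds. -/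
/-!
A post-processing of `A(y,y²)` with first effect `(x,x²)` amounts to weights `a, b ∈ [0,1]` with
`x = a y + b (1 - y)` and `x² = a y² + b (1 - y²)`. Eliminating `a` gives `b (1 - y) = x (x - y)`,
which is impossible with `b ≥ 0` when `0 < x < y < 1`. Eliminating `b` gives
`a y = x (1 + y - x)`, that is `(1 - a) y = -(x - y) (1 - x)`, which is impossible with `a ≤ 1`
when `0 < y < x < 1`.
-/

/-- For `0 < s < t < 1`, the two-outcome classical-bit EVMs `𝖠_{s,s²}` and
`𝖠_{t,t²}` are incomparable with respect to post-processing. -/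
theorem stmt_8 (s t : ℝ) (hs : 0 < s) (hst : s < t) (ht : t < 1) :
    (¬ ∃ p : Fin 2 → Fin 2 → ℝ,
      (∀ j k, 0 ≤ p j k) ∧ (∀ k, ∑ j, p j k = 1) ∧
      (∀ j, (![((s, s ^ 2) : ℝ × ℝ), (1 - s, 1 - s ^ 2)]) j
          = ∑ k, p j k • (![((t, t ^ 2) : ℝ × ℝ), (1 - t, 1 - t ^ 2)]) k)) ∧
    (¬ ∃ p : Fin 2 → Fin 2 → ℝ,
      (∀ j k, 0 ≤ p j k) ∧ (∀ k, ∑ j, p j k = 1) ∧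
      (∀ j, (![((t, t ^ 2) : ℝ × ℝ), (1 - t, 1 - t ^ 2)]) j
          = ∑ k, p j k • (![((s, s ^ 2) : ℝ × ℝ), (1 - s, 1 - s ^ 2)]) k)) := by
  constructor
  · rintro ⟨p, hp, -, h⟩
    have h0 := h 0
    simp only [Fin.sum_univ_two, Matrix.cons_val_zero, Matrix.cons_val_one, Prod.smul_mk,
      Prod.mk_add_mk, smul_eq_mul, Prod.mk.injEq] at h0
    obtain ⟨h1, h2⟩ := h0
    have key : p 0 1 * (1 - t) = s * (s - t) := by linear_combination t * h1 - h2
    have hb : 0 ≤ p 0 1 * (1 - t) := mul_nonneg (hp 0 1) (by linarith)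
    have hneg : s * (s - t) < 0 := mul_neg_of_pos_of_neg hs (by linarith)
    linarith
  · rintro ⟨p, hp, hsum, h⟩
    have h0 := h 0
    simp only [Fin.sum_univ_two, Matrix.cons_val_zero, Matrix.cons_val_one, Prod.smul_mk,
      Prod.mk_add_mk, smul_eq_mul, Prod.mk.injEq] at h0
    obtain ⟨h1, h2⟩ := h0
    have hcol := hsum 0
    rw [Fin.sum_univ_two] at hcol
    have key : p 1 0 * s = -((t - s) * (1 - t)) := by
      linear_combination s * hcol + (1 + s) * h1 - h2
    have ha : 0 ≤ p 1 0 * s := mul_nonneg (hp 1 0) hs.le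
    have hpos : 0 < (t - s) * (1 - t) := mul_pos (by linarith) (by linarith)
    linarith
end

section
/- Let n : ℕ with n ≥ 3 and for j ∈ Fin n set s_j := 3^j / 3^n (i.e., s_j = 3^{j−n}). Define the 3-outcome EVM on the classical bit A⁽ʲ⁾ := ((s_j/n, s_j²/n), ((1−s_j)/n, (1−s_j²)/n), ((n−1)/n, (n−1)/n)) and the (2(n−1)+1)-outcome EVM B⁽ʲ⁾ whose components are (1/n, 1/n) together with, for each k ∈ Fin n with k ≠ j, the two components (s_k/n, s_k²/n) and ((1−s_k)/n, (1−s_k²)/n). Then for all j, k ∈ Fin n with j ≠ k: (1) neither A⁽ʲ⁾ ≼post A⁽ᵏ⁾ nor A⁽ᵏ⁾ ≼post A⁽ʲ⁾; (2) neither B⁽ʲ⁾ ≼post B⁽ᵏ⁾ nor B⁽ᵏ⁾ ≼post B⁽ʲ⁾; (3) A⁽ʲ⁾ ≼post B⁽ᵏ⁾; (4) ¬(B⁽ᵏ⁾ ≼post A⁽ʲ⁾); and for every j ∈ Fin n: (5) neither A⁽ʲ⁾ ≼post B⁽ʲ⁾ nor B⁽ʲ⁾ ≼post A⁽ʲ⁾.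 Consequently the map a_j ↦ A⁽ʲ⁾, b_j ↦ B⁽ʲ⁾ is an order embedding of the standard example of an n-dimensional poset into the post-processing order of classical-bit EVMs. -/
/-!
Everything follows from two facts and transitivity of post-processing.

* `evmA_post_evmB`: for `j ≠ k`, `A⁽ʲ⁾` is obtained from `B⁽ᵏ⁾` by keeping the two outcomes
  labelled `j` and merging all the others.
* `not_evmA_post_evmB`: `A⁽ʲ⁾` is not a post-processing of `B⁽ʲ⁾`. Testing against the linear
  functional `(x, y) ↦ c x - y`, with `c = 3 s_j`, gives `2 s_j² / n` on the first outcome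
  of `A⁽ʲ⁾`. On any post-processed outcome of `B⁽ʲ⁾` it is at most the sum of the positive values
  on the outcomes of `B⁽ʲ⁾`. Only the vectors `(s_k, s_k²) / n` with `k < j` have slope less
  than `c`, so that sum is at most `∑_{k < j} 3 s_j s_k / n ≤ (3/2) s_j² / n`, because the `s_k` grow
  geometrically with ratio `3`.

The remaining non-comparabilities reduce to the second fact. For instance,
`A⁽ʲ⁾ ≼ A⁽ᵏ⁾ ≼ B⁽ʲ⁾` is impossible, and so is `A⁽ᵏ⁾ ≼ B⁽ʲ⁾ ≼ B⁽ᵏ⁾`; if `B⁽ᵏ⁾ ≼ A⁽ʲ⁾`, then any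
`l ∉ {j, k}` gives `A⁽ˡ⁾ ≼ B⁽ᵏ⁾ ≼ A⁽ʲ⁾`, which has just been excluded.
-/

/-- `M` is a finite-outcome EVM on the classical bit. -/
def IsBitEVM {ι : Type*} [Fintype ι] (M : ι → ℝ × ℝ) : Prop :=
  (∀ k, 0 ≤ (M k).1 ∧ 0 ≤ (M k).2) ∧ ∑ k, M k = ((1 : ℝ), (1 : ℝ))

/-- Classical post-processing relation between finite-outcome classical-bit
EVMs. -/
def BitPost {ι κ : Type*} [Fintype ι] [Fintype κ]
    (M : ι → ℝ × ℝ) (N : κ → ℝ × ℝ) : Prop :=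
  ∃ p : ι → κ → ℝ,
    (∀ j k, 0 ≤ p j k) ∧ (∀ k, ∑ j, p j k = 1) ∧ ∀ j, M j = ∑ k, p j k • N k

lemma BitPost.trans {ι κ μ : Type*} [Fintype ι] [Fintype κ] [Fintype μ]
    {L : ι → ℝ × ℝ} {M : κ → ℝ × ℝ} {N : μ → ℝ × ℝ}
    (h₁ : BitPost L M) (h₂ : BitPost M N) : BitPost L N := by
  obtain ⟨p, hp0, hp1, hp⟩ := h₁
  obtain ⟨q, hq0, hq1, hq⟩ := h₂
  refine ⟨fun i m => ∑ k, p i k * q k m,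
    fun i m => Finset.sum_nonneg fun k _ => mul_nonneg (hp0 i k) (hq0 k m), fun m => ?_,
    fun i => ?_⟩
  · rw [Finset.sum_comm]
    simp only [← Finset.sum_mul, hp1, one_mul, hq1]
  · rw [hp i]
    simp only [Finset.sum_smul, hq, Finset.smul_sum, mul_smul]
    exact Finset.sum_comm

/-- Merging outcomes along a relabelling `f` of outcomes is a post-processing. -/
lemma BitPost.of_relabel {ι κ : Type*} [Fintype ι] [Fintype κ] [DecidableEq ι]
    {M : ι → ℝ × ℝ} {N : κ → ℝ × ℝ} (f : κ → ι)
    (h : ∀ i, M i = ∑ k, if f k = i then N k else 0) : BitPost M N := by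
  refine ⟨fun i k => if f k = i then 1 else 0, fun i k => ?_, fun k => by simp, fun i => ?_⟩
  · dsimp only
    split_ifs <;> norm_num
  · rw [h i]
    exact Finset.sum_congr rfl fun k _ => by by_cases hk : f k = i <;> simp [hk]

/-- The slope `s_j = 3 ^ (j - n)`. -/
noncomputable def sVal {n : ℕ} (j : Fin n) : ℝ := 3 ^ (j : ℕ) / 3 ^ n

/-- The three-outcome EVM `A⁽ʲ⁾`. -/
noncomputable def evmA {n : ℕ} (j : Fin n) : Fin 3 → ℝ × ℝ :=
  ![(sVal j / n, (sVal j) ^ 2 / n),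
    ((1 - sVal j) / n, (1 - (sVal j) ^ 2) / n),
    (((n : ℝ) - 1) / n, ((n : ℝ) - 1) / n)]

/-- The EVM `B⁽ʲ⁾`. The left summand indexes the outcome `(1/n, 1/n)`; the outcomes
`inr (k, 0)` and `inr (k, 1)` are `(s_k, s_k²) / n` and `(1 - s_k, 1 - s_k²) / n`. -/
noncomputable def evmB {n : ℕ} (j : Fin n) : (Unit ⊕ {k : Fin n // k ≠ j} × Fin 2) → ℝ × ℝ :=
  Sum.elim (fun _ => (1 / (n : ℝ), 1 / (n : ℝ)))
    (fun kb => if kb.2 = 0 then (sVal kb.1.1 / n, (sVal kb.1.1) ^ 2 / n)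
      else ((1 - sVal kb.1.1) / n, (1 - (sVal kb.1.1) ^ 2) / n))

lemma sVal_pos {n : ℕ} (j : Fin n) : 0 < sVal j := by
  unfold sVal; positivity

lemma three_mul_sVal_le_of_lt {n : ℕ} {j k : Fin n} (h : j < k) :
    3 * sVal j ≤ sVal k := by
  unfold sVal
  rw [mul_div_assoc', ← pow_succ']
  gcongr
  · norm_num
  · exact h

lemma three_mul_sVal_le_one {n : ℕ} (j : Fin n) : 3 * sVal j ≤ 1 := by
  unfold sVal
  rw [mul_div_assoc', ← pow_succ', div_le_one (by positivity)]
  exact pow_le_pow_right₀ (by norm_num) j.2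

lemma sum_sVal_le {n : ℕ} (j : Fin n) :
    ∑ k : Fin n, (if k < j then sVal k else 0) ≤ sVal j / 2 := by
  have h1 : ∑ k : Fin n, (if k < j then sVal k else 0)
      = ∑ i ∈ Finset.range n, (if i < (j : ℕ) then (3 : ℝ) ^ i / 3 ^ n else 0) := by
    rw [← Fin.sum_univ_eq_sum_range]
    rfl
  have h2 : (Finset.range n).filter (· < (j : ℕ)) = Finset.range j := by
    ext i
    have := j.2
    simp only [Finset.mem_filter, Finset.mem_range]
    omega
  rw [h1, ← Finset.sum_filter, h2, ← Finset.sum_div, geom_sum_eq (by norm_num)]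
  unfold sVal
  rw [div_right_comm]
  gcongr <;> norm_num

/-- Off the diagonal, `A⁽ʲ⁾` is `B⁽ᵏ⁾` with all outcomes not labelled `j` merged. -/
lemma evmA_post_evmB {n : ℕ} {j k : Fin n} (hjk : j ≠ k) : BitPost (evmA j) (evmB k) := by
  have hn : (n : ℝ) ≠ 0 := by
    have := j.pos
    positivity
  refine BitPost.of_relabel
    (Sum.elim (fun _ => 2) fun lb => if lb.1.1 = j then (if lb.2 = 0 then 0 else 1) else 2)
    fun i => ?_
  have hsum : ∀ f : Fin n → ℝ × ℝ, ∑ l : {l : Fin n // l ≠ k}, f l = (∑ l, f l) - f k := by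
    intro f
    rw [← Finset.sum_subtype ({k}ᶜ : Finset (Fin n)) (by simp) f,
      ← Finset.sum_compl_add_sum {k} f]
    simp
  rw [Fintype.sum_sum_type, Fintype.sum_prod_type]
  simp only [Fin.sum_univ_two, evmB, Sum.elim_inl, Sum.elim_inr, if_true, one_ne_zero, if_false]
  fin_cases i
  · have h := hsum fun l => if l = j then (sVal l / n, sVal l ^ 2 / n) else 0
    rw [Finset.sum_ite_eq' _ _ _] at h
    simp only [Finset.mem_univ, if_true, hjk.symm, if_false, sub_zero] at h
    refine Eq.trans h.symm ?_
    simp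
    refine Finset.sum_congr rfl fun l _ => ?_
    by_cases hl : l.1 = j <;> simp [hl]
  · have h := hsum fun l => if l = j then ((1 - sVal l) / n, (1 - sVal l ^ 2) / n) else 0
    rw [Finset.sum_ite_eq' _ _ _] at h
    simp only [Finset.mem_univ, if_true, hjk.symm, if_false, sub_zero] at h
    refine Eq.trans h.symm ?_
    simp
    refine Finset.sum_congr rfl fun l _ => ?_
    by_cases hl : l.1 = j <;> simp [hl]
  · -- Each pair labelled `l ≠ j` contributes `(1/n, 1/n)`; write this as a constant minus a
    -- correction at `l = j`.
    have h := hsum fun l =>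
      ((1 / n, 1 / n) : ℝ × ℝ) - if l = j then ((1 / n, 1 / n) : ℝ × ℝ) else 0
    trans ((1 / n, 1 / n) : ℝ × ℝ) +
      ∑ l : {l : Fin n // l ≠ k}, (((1 / n, 1 / n) : ℝ × ℝ) -
        if l.1 = j then ((1 / n, 1 / n) : ℝ × ℝ) else 0)
    · rw [h, Finset.sum_sub_distrib, Finset.sum_ite_eq' _ _ _]
      ext <;> simp [evmA, hjk.symm] <;> field_simp
    · congr 1
      · simp
      · refine Finset.sum_congr rfl fun l _ => ?_
        by_cases hl : l.1 = j
        · simp [hl]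
        · simp [hl]
          constructor <;> ring

/-- `3 s_j x - y` separates the first outcome of `A⁽ʲ⁾` from the zonotope of `B⁽ʲ⁾`. -/
lemma not_evmA_post_evmB {n : ℕ} (j : Fin n) : ¬ BitPost (evmA j) (evmB j) := by
  rintro ⟨p, hp0, hp1, hp⟩
  have hn : (0 : ℝ) < n := by exact_mod_cast j.pos
  have hs := sVal_pos j
  have hle1 : ∀ i k, p i k ≤ 1 := fun i k => by
    rw [← hp1 k]
    exact Finset.single_le_sum (fun i _ => hp0 i k) (Finset.mem_univ i)
  have hx : sVal j / n = ∑ k, p 0 k * (evmB j k).1 := by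
    simpa [evmA, Prod.fst_sum] using congrArg Prod.fst (hp 0)
  have hy : sVal j ^ 2 / n = ∑ k, p 0 k * (evmB j k).2 := by
    simpa [evmA, Prod.snd_sum] using congrArg Prod.snd (hp 0)
  have key : 3 * sVal j * (sVal j / n) - sVal j ^ 2 / n
      = ∑ k, p 0 k * (3 * sVal j * (evmB j k).1 - (evmB j k).2) := by
    rw [hx, hy, Finset.mul_sum, ← Finset.sum_sub_distrib]
    exact Finset.sum_congr rfl fun k _ => by ring
  -- An upper bound for the positive part of the functional on each outcome of `B⁽ʲ⁾`.
  let g : (Unit ⊕ {k : Fin n // k ≠ j} × Fin 2) → ℝ := Sum.elim (fun _ => 0)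
    (fun kb => if kb.2 = 0 then 3 * sVal j / n * (if kb.1.1 < j then sVal kb.1.1 else 0) else 0)
  have hbound : ∀ k, p 0 k * (3 * sVal j * (evmB j k).1 - (evmB j k).2) ≤ g k := by
    intro k
    suffices h : 3 * sVal j * (evmB j k).1 - (evmB j k).2 ≤ g k ∧ 0 ≤ g k from
      (mul_le_mul_of_nonneg_left h.1 (hp0 0 k)).trans (mul_le_of_le_one_left h.2 (hle1 0 k))
    have hj1 := three_mul_sVal_le_one j
    rcases k with u | ⟨⟨k, hk⟩, b⟩
    · simp only [g, evmB, Sum.elim_inl, le_refl, and_true]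
      rw [mul_one_div, ← sub_div]
      exact div_nonpos_of_nonpos_of_nonneg (by linarith) hn.le
    · have hk0 := sVal_pos k
      have hk1 := three_mul_sVal_le_one k
      simp only [g, evmB, Sum.elim_inr]
      by_cases hb : b = 0
      · simp only [hb, if_true]
        rcases lt_or_gt_of_ne hk with h | h
        · simp only [h, if_true]
          refine ⟨?_, by positivity⟩
          have : 0 ≤ sVal k ^ 2 / n := by positivity
          calc _ ≤ 3 * sVal j * (sVal k / n) := by linarith
            _ = _ := by ring
        · simp only [h.not_gt, if_false, mul_zero, le_refl, and_true]
          have h3 := three_mul_sVal_le_of_lt h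
          rw [mul_div_assoc', ← sub_div]
          exact div_nonpos_of_nonpos_of_nonneg (by nlinarith) hn.le
      · simp only [hb, if_false, le_refl, and_true]
        rw [mul_div_assoc', ← sub_div]
        exact div_nonpos_of_nonpos_of_nonneg (by nlinarith) hn.le
  have hg : ∑ k, g k ≤ 3 * sVal j / n * (sVal j / 2) := by
    rw [Fintype.sum_sum_type, Fintype.sum_prod_type]
    simp only [Fin.sum_univ_two, g, Sum.elim_inl, Sum.elim_inr, if_true, one_ne_zero, if_false,
      Finset.sum_const_zero, zero_add, add_zero, ← Finset.mul_sum]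
    refine mul_le_mul_of_nonneg_left (le_trans ?_ (sum_sVal_le j)) (by positivity)
    rw [← Finset.sum_subtype ({j}ᶜ : Finset (Fin n)) (by simp)
      (fun k => if k < j then sVal k else 0)]
    refine Finset.sum_le_sum_of_subset_of_nonneg (Finset.subset_univ _) fun k _ _ => ?_
    split_ifs
    exacts [(sVal_pos k).le, le_rfl]
  have hfin := (key.trans_le (Finset.sum_le_sum fun k _ => hbound k)).trans hg
  have hpos : 0 < sVal j ^ 2 / n := by positivity
  have e1 : 3 * sVal j * (sVal j / n) = 3 * (sVal j ^ 2 / n) := by ring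
  have e2 : 3 * sVal j / n * (sVal j / 2) = 3 / 2 * (sVal j ^ 2 / n) := by ring
  linarith

lemma not_evmA_post_evmA {n : ℕ} {j k : Fin n} (h : j ≠ k) : ¬ BitPost (evmA j) (evmA k) :=
  fun hA => not_evmA_post_evmB j (hA.trans (evmA_post_evmB h.symm))

lemma not_evmB_post_evmB {n : ℕ} {j k : Fin n} (h : j ≠ k) : ¬ BitPost (evmB j) (evmB k) :=
  fun hB => not_evmA_post_evmB k ((evmA_post_evmB h.symm).trans hB)

/-- With at least three indices, some `l` avoids both `j` and `k`, and
`A⁽ˡ⁾ ≼ B⁽ᵏ⁾ ≼ A⁽ʲ⁾` is impossible. -/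
lemma not_evmB_post_evmA {n : ℕ} (hn : 3 ≤ n) (j k : Fin n) : ¬ BitPost (evmB k) (evmA j) := by
  intro h
  have hcard : ({j, k} : Finset (Fin n)).card < (Finset.univ : Finset (Fin n)).card := by
    rw [Finset.card_univ, Fintype.card_fin]
    exact Finset.card_le_two.trans_lt hn
  obtain ⟨l, -, hl⟩ := Finset.exists_mem_notMem_of_card_lt_card hcard
  simp only [Finset.mem_insert, Finset.mem_singleton, not_or] at hl
  exact not_evmA_post_evmA hl.1 ((evmA_post_evmB hl.2).trans h)

/-- The standard example of an `n`-dimensional poset order-embeds into the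
post-processing order of classical-bit measurements: with `s_j = 3^{j-n}`, the
EVMs `A⁽ʲ⁾` and `B⁽ʲ⁾` realize exactly the comparabilities `a_j < b_k`
(`j ≠ k`) of the standard example. -/
theorem stmt_10 (n : ℕ) (hn : 3 ≤ n) :
    letI s : Fin n → ℝ := fun j => 3 ^ (j : ℕ) / 3 ^ n
    letI A : Fin n → Fin 3 → ℝ × ℝ := fun j =>
      ![(s j / n, (s j) ^ 2 / n),
        ((1 - s j) / n, (1 - (s j) ^ 2) / n),
        (((n : ℝ) - 1) / n, ((n : ℝ) - 1) / n)]
    letI B : (j : Fin n) → (Unit ⊕ {k : Fin n // k ≠ j} × Fin 2) → ℝ × ℝ := fun j =>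
      Sum.elim (fun _ => (1 / (n : ℝ), 1 / (n : ℝ)))
        (fun kb => if kb.2 = 0 then (s kb.1 / n, (s kb.1) ^ 2 / n)
          else ((1 - s kb.1) / n, (1 - (s kb.1) ^ 2) / n))
    (∀ j k : Fin n, j ≠ k → ¬ BitPost (A j) (A k) ∧ ¬ BitPost (A k) (A j)) ∧
    (∀ j k : Fin n, j ≠ k → ¬ BitPost (B j) (B k) ∧ ¬ BitPost (B k) (B j)) ∧
    (∀ j k : Fin n, j ≠ k → BitPost (A j) (B k)) ∧
    (∀ j k : Fin n, j ≠ k → ¬ BitPost (B k) (A j)) ∧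
    (∀ j : Fin n, ¬ BitPost (A j) (B j) ∧ ¬ BitPost (B j) (A j)) := by
  exact ⟨fun _ _ h => ⟨not_evmA_post_evmA h, not_evmA_post_evmA h.symm⟩,
    fun _ _ h => ⟨not_evmB_post_evmB h, not_evmB_post_evmB h.symm⟩,
    fun _ _ h => evmA_post_evmB h,
    fun j k _ => not_evmB_post_evmA hn j k,
    fun j => ⟨not_evmA_post_evmB j, not_evmB_post_evmA hn j j⟩⟩
end

section
/- For every n : ℕ, there is no family f : Fin n → (EVM → ℝ) of real-valued functions on the set of finite-outcome EVMs on the classical bit such that for all EVMs M, N: M ≼post N ↔ ∀ i, f i M ≤ f i N. That is, no finite family of order monotones characterizes the post-processing preorder of classical-bit measurements. -/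
/-!
The post-processing order contains every standard example `S_d`: elements `a_i`, `b_j` with
`a_i ≼ b_j` exactly when `i ≠ j`.  If `n` real functions characterized the order and `d > n`, then
for each `i` some function is larger at `a_i` than at `b_i`; by pigeonhole one function `g` serves
two indices `i ≠ j`, whence `g a_i > g b_i ≥ g a_j > g b_j ≥ g a_i`, a contradiction.

To realize `S_d`, view an EVM through its zonotope `{∑ k, q k • M k | 0 ≤ q k ≤ 1}`.  The
two-outcome EVM with first effect `P` is below `N` exactly when `P` lies in the zonotope of `N`.
Put `P_k = (k/D, k²/D²)` on a parabola, let `a_i` be the two-outcome EVM with first effect `P_i`,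
and let the outcomes of `b_j` be the successive increments of the convex polygon `P_0, …, P_D` in
which the vertex `P_j` has been replaced by the midpoint of its two neighbours.  The remaining
vertices are partial sums of increments, so `a_i ≼ b_j` for `i ≠ j`, whereas the functional
`D² y - 2jD x` separates `P_j` from the zonotope of `b_j`.
-/

/-- A finite-outcome effect-valued measure on the classical bit. -/
structure BitEVM where
  m : ℕ
  M : Fin m → ℝ × ℝ
  nonneg : ∀ k, 0 ≤ (M k).1 ∧ 0 ≤ (M k).2
  total : ∑ k, M k = ((1 : ℝ), (1 : ℝ))

/-- The classical post-processing relation on finite-outcome classical-bit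
EVMs. -/
def BitEVM.Post (E F : BitEVM) : Prop :=
  ∃ p : Fin E.m → Fin F.m → ℝ,
    (∀ j k, 0 ≤ p j k) ∧ (∀ k, ∑ j, p j k = 1) ∧ ∀ j, E.M j = ∑ k, p j k • F.M k

/-- Height, scaled by `D²`, of the `k`-th vertex of the polygon inscribed in the parabola whose
`j`-th vertex is flattened to the midpoint of its neighbours: `((j-1)² + (j+1)²)/2 = j² + 1`. -/
noncomputable def flatHeight (j k : ℕ) : ℝ := (k : ℝ) ^ 2 + if k = j then 1 else 0

lemma flatHeight_step_nonneg (j k : ℕ) : 0 ≤ flatHeight j (k + 1) - flatHeight j k := by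
  have : (0 : ℝ) ≤ k := k.cast_nonneg
  unfold flatHeight
  push_cast
  split_ifs <;> nlinarith

/-- The `k`-th edge vector of the flattened polygon. -/
noncomputable def flatEdge (D j k : ℕ) : ℝ × ℝ :=
  (1 / (D : ℝ), (flatHeight j (k + 1) - flatHeight j k) / (D : ℝ) ^ 2)

lemma sum_flatEdge (D j i : ℕ) (hj : 0 < j) :
    ∑ k ∈ Finset.range i, flatEdge D j k = ((i : ℝ) / D, flatHeight j i / (D : ℝ) ^ 2) := by
  have h0 : flatHeight j 0 = 0 := by simp [flatHeight, hj.ne]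
  ext
  · simp [flatEdge, Prod.fst_sum, div_eq_mul_inv]
  · simp only [flatEdge, Prod.snd_sum]
    rw [← Finset.sum_div, Finset.sum_range_sub, h0, sub_zero]

/-- The EVM whose outcomes are the edges of the polygon flattened at the vertex `j`. -/
noncomputable def flatEVM (D j : ℕ) (hj : 0 < j) (hjD : j < D) : BitEVM where
  m := D
  M k := flatEdge D j k
  nonneg k := ⟨by simp [flatEdge], div_nonneg (flatHeight_step_nonneg _ _) (by positivity)⟩
  total := by
    have hD : (D : ℝ) ≠ 0 := by exact_mod_cast (by omega : D ≠ 0)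
    rw [Fin.sum_univ_eq_sum_range (flatEdge D j), sum_flatEdge D j D hj]
    simp [flatHeight, hjD.ne', hD]

/-- The two-outcome EVM whose first effect is the point `(i/D, i²/D²)` of the parabola. -/
noncomputable def pointEVM (D i : ℕ) (hiD : i < D) : BitEVM where
  m := 2
  M := ![((i : ℝ) / D, (i : ℝ) ^ 2 / (D : ℝ) ^ 2),
    (1 - (i : ℝ) / D, 1 - (i : ℝ) ^ 2 / (D : ℝ) ^ 2)]
  nonneg k := by
    have hD : (0 : ℝ) < D := by exact_mod_cast (by omega : 0 < D)
    have hi : (i : ℝ) ≤ D := by exact_mod_cast hiD.le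
    have h1 : (i : ℝ) / D ≤ 1 := (div_le_one hD).2 hi
    have h2 : (i : ℝ) ^ 2 / (D : ℝ) ^ 2 ≤ 1 := by
      rw [div_le_one (by positivity)]; gcongr
    fin_cases k
    · exact ⟨by simp; positivity, by simp; positivity⟩
    · exact ⟨by simpa using h1, by simpa using h2⟩
  total := by simp

lemma pointEVM_post_flatEVM (D i j : ℕ) (hiD : i < D) (hj : 0 < j) (hjD : j < D) (hij : i ≠ j) :
    (pointEVM D i hiD).Post (flatEVM D j hj hjD) := by
  -- The first outcome collects the edges before the vertex `i`.
  let p : Fin 2 → Fin D → ℝ :=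
    ![fun k => if (k : ℕ) < i then 1 else 0, fun k => if (k : ℕ) < i then 0 else 1]
  have hfirst : ∑ k : Fin D, p 0 k • flatEdge D j k
      = ((i : ℝ) / D, (i : ℝ) ^ 2 / (D : ℝ) ^ 2) := by
    have h := sum_flatEdge D j i hj
    rw [flatHeight, if_neg hij, add_zero] at h
    rw [← h]
    simp only [p, Matrix.cons_val_zero, ite_smul, one_smul, zero_smul]
    rw [Fin.sum_univ_eq_sum_range (fun k => if k < i then flatEdge D j k else 0),
      ← Finset.sum_filter]
    congr 1
    ext k
    simp only [Finset.mem_filter, Finset.mem_range]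
    omega
  have hp : ∀ k, p 0 k + p 1 k = 1 := by
    intro k
    by_cases h : (k : ℕ) < i <;> simp [p, h]
  have hsecond : ∑ k : Fin D, p 1 k • flatEdge D j k
      = (1 - (i : ℝ) / D, 1 - (i : ℝ) ^ 2 / (D : ℝ) ^ 2) := by
    have ht : ∑ k : Fin D, flatEdge D j k = ((1 : ℝ), (1 : ℝ)) := (flatEVM D j hj hjD).total
    have : ∑ k : Fin D, p 0 k • flatEdge D j k + ∑ k : Fin D, p 1 k • flatEdge D j k
        = ((1 : ℝ), (1 : ℝ)) := by
      rw [← Finset.sum_add_distrib, ← ht]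
      exact Finset.sum_congr rfl fun k _ => by rw [← add_smul, hp, one_smul]
    rw [hfirst] at this
    rw [eq_sub_of_add_eq' this]
    rfl
  refine ⟨p, ?_, ?_, ?_⟩
  · change ∀ (l : Fin 2) (k : Fin D), 0 ≤ p l k
    intro l k
    by_cases h : (k : ℕ) < i <;> fin_cases l <;> simp [p, h]
  · change ∀ k : Fin D, ∑ l : Fin 2, p l k = 1
    intro k
    rw [Fin.sum_univ_two, hp]
  · change ∀ l : Fin 2, (pointEVM D i hiD).M l = ∑ k : Fin D, p l k • flatEdge D j k
    intro l
    fin_cases l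
    · exact hfirst.symm
    · exact hsecond.symm

lemma not_pointEVM_post_flatEVM (D j : ℕ) (hj : 0 < j) (hjD : j < D) :
    ¬ (pointEVM D j hjD).Post (flatEVM D j hj hjD) := by
  rintro ⟨p, hp0, hp1, hpM⟩
  change Fin 2 → Fin D → ℝ at p
  change ∀ (l : Fin 2) (k : Fin D), 0 ≤ p l k at hp0
  change ∀ k : Fin D, ∑ l : Fin 2, p l k = 1 at hp1
  have hM : ((j : ℝ) / D, (j : ℝ) ^ 2 / (D : ℝ) ^ 2) = ∑ k : Fin D, p 0 k • flatEdge D j k :=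
    hpM (0 : Fin 2)
  have hle : ∀ k, p 0 k ≤ 1 := fun k => by
    have := hp1 k
    rw [Fin.sum_univ_two] at this
    linarith [hp0 1 k]
  have hD : (0 : ℝ) < D := by exact_mod_cast (by omega : 0 < D)
  -- The functional `D² y - 2jD x`, whose kernel is parallel to the flattened edges at `j`.
  let L : ℝ × ℝ →ₗ[ℝ] ℝ :=
    (D : ℝ) ^ 2 • LinearMap.snd ℝ ℝ ℝ - (2 * (j : ℝ) * D) • LinearMap.fst ℝ ℝ ℝ
  have hL : ∀ x y : ℝ, L (x, y) = (D : ℝ) ^ 2 * y - 2 * j * D * x := fun x y => by simp [L]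
  have hLe : ∀ k, L (flatEdge D j k) = flatHeight j (k + 1) - flatHeight j k - 2 * j := fun k => by
    rw [flatEdge, hL]; field_simp
  have hneg : ∀ k, k < j → L (flatEdge D j k) ≤ 0 := by
    intro k hk
    have h1 : (k : ℝ) + 1 ≤ j := by exact_mod_cast hk
    rw [hLe, flatHeight, flatHeight, if_neg hk.ne]
    push_cast
    split_ifs <;> nlinarith
  have hpos : ∀ k, j ≤ k → 0 ≤ L (flatEdge D j k) := by
    intro k hk
    have h1 : (j : ℝ) ≤ k := by exact_mod_cast hk
    rw [hLe, flatHeight, flatHeight, if_neg (by omega : k + 1 ≠ j)]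
    push_cast
    split_ifs <;> nlinarith
  have hval : L ((j : ℝ) / D, (j : ℝ) ^ 2 / (D : ℝ) ^ 2) = -(j : ℝ) ^ 2 := by
    rw [hL]; field_simp; ring
  -- `L` is minimized over the zonotope by taking exactly the edges before the vertex `j`.
  have hmin : ∑ k : Fin D, (if (k : ℕ) < j then L (flatEdge D j k) else 0)
      ≤ ∑ k : Fin D, p 0 k * L (flatEdge D j k) := by
    refine Finset.sum_le_sum fun k _ => ?_
    split_ifs with h
    · nlinarith [hneg k h, hle k]
    · exact mul_nonneg (hp0 0 k) (hpos k (not_lt.1 h))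
  have hsum : ∑ k : Fin D, (if (k : ℕ) < j then L (flatEdge D j k) else 0)
      = 1 - (j : ℝ) ^ 2 := by
    rw [Fin.sum_univ_eq_sum_range (fun k => if k < j then L (flatEdge D j k) else 0),
      ← Finset.sum_filter]
    have : (Finset.range D).filter (· < j) = Finset.range j := by
      ext k
      simp only [Finset.mem_filter, Finset.mem_range]
      omega
    rw [this, ← map_sum, sum_flatEdge D j j hj, hL, flatHeight, if_pos rfl]
    field_simp
    ring
  have := congrArg L hM
  rw [hval, map_sum] at this
  simp only [map_smul, smul_eq_mul] at this
  linarith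

/-- No finite family of real-valued order monotones characterizes the
post-processing order of finite-outcome measurements on the classical bit:
its order monotone dimension is infinite. -/
theorem stmt_12 (n : ℕ) :
    ¬ ∃ f : Fin n → BitEVM → ℝ,
      ∀ M N : BitEVM, M.Post N ↔ ∀ i, f i M ≤ f i N := by
  rintro ⟨f, hf⟩
  -- The indices `1, …, n + 1` are the interior vertices of the polygon with `D = n + 2` edges.
  let a : Fin (n + 1) → BitEVM := fun i => pointEVM (n + 2) (i + 1) (by omega)
  let b : Fin (n + 1) → BitEVM := fun j => flatEVM (n + 2) (j + 1) (by omega) (by omega)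
  have hne : ∀ i, ∃ c, f c (b i) < f c (a i) := by
    intro i
    have := mt (hf (a i) (b i)).2 (not_pointEVM_post_flatEVM (n + 2) (i + 1) (by omega) (by omega))
    simpa using this
  have hle : ∀ i j, i ≠ j → ∀ c, f c (a i) ≤ f c (b j) := fun i j hij =>
    (hf (a i) (b j)).1 (pointEVM_post_flatEVM _ _ _ _ _ _ (by
      have := Fin.val_ne_of_ne hij
      omega))
  choose c hc using hne
  obtain ⟨i, j, hij, hcc⟩ := Fintype.exists_ne_map_eq_of_card_lt c (by simp)
  have h1 := hc i
  have h2 := hc j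
  rw [← hcc] at h2
  linarith [hle i j hij (c i), hle j i hij.symm (c i)]
end

section
/- Fix d : ℕ with d ≥ 1. There exists a countable family f : ℕ → (EVM → ℝ) of real-valued functions on the set of finite-outcome EVMs on the d-outcome classical system such that for all EVMs M, N: M ≼post N ↔ ∀ i : ℕ, f i M ≤ f i N. -/
/-!
This is a finite Blackwell theorem. To a nonempty finite family of vectors `A i` attach the sublinear
function `φ_A v = max_i ⟨A i, v⟩` and the functional `E ↦ ∑ j, φ_A (E j)`. Sublinearity makes each
such functional monotone under post-processing (`gain_mono`). Conversely, the post-processings of `N`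
with a fixed number of outcomes form a compact convex set. If `M` lies outside it, a separating linear
functional is a family `A`, one vector per outcome of `M`, and the maximum of this functional over the
set is exactly `∑ k, φ_A (N k)`, attained by a deterministic post-processing; hence `φ_A` violates
monotonicity (`post_of_gain_le`). Finally, the functionals are continuous in `A`, so families with
rational entries suffice, and there are countably many of them.
-/

/-- A finite-outcome effect-valued measure on the `d`-outcome classical
system. -/
structure CEVM (d : ℕ) where
  m : ℕ
  M : Fin m → Fin d → ℝ
  nonneg : ∀ j x, 0 ≤ M j x
  total : ∀ x, ∑ j, M j x = 1

/-- The classical post-processing relation on finite-outcome EVMs on the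
`d`-outcome classical system. -/
def CEVM.Post {d : ℕ} (E F : CEVM d) : Prop :=
  ∃ p : Fin E.m → Fin F.m → ℝ,
    (∀ j k, 0 ≤ p j k) ∧ (∀ k, ∑ j, p j k = 1) ∧ ∀ j, E.M j = ∑ k, p j k • F.M k

/-- The sum over the outcomes of `E` of the sublinear function `v ↦ max_i ⟨A i, v⟩`. In Bayesian
terms: `d` times the optimal expected gain, under a uniform prior, when `A i x` is the payoff of
action `i` in state `x` and the action is chosen after seeing the outcome. -/
noncomputable def gain {d n : ℕ} (A : Fin (n + 1) → Fin d → ℝ) (E : CEVM d) : ℝ :=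
  ∑ j, Finset.univ.sup' Finset.univ_nonempty (fun i => ∑ x, A i x * E.M j x)

lemma gain_mono {d n : ℕ} (A : Fin (n + 1) → Fin d → ℝ) {E F : CEVM d} (h : E.Post F) :
    gain A E ≤ gain A F := by
  obtain ⟨p, hp0, hp1, hp⟩ := h
  unfold gain
  set φ : Fin F.m → ℝ := fun k =>
    Finset.univ.sup' Finset.univ_nonempty (fun i => ∑ x, A i x * F.M k x) with hφ
  calc _ ≤ ∑ j, ∑ k, p j k * φ k := by
        refine Finset.sum_le_sum fun j _ => Finset.sup'_le _ _ fun i _ => ?_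
        calc ∑ x, A i x * E.M j x = ∑ k, p j k * ∑ x, A i x * F.M k x := by
              simp only [hp j, Finset.sum_apply, Pi.smul_apply, smul_eq_mul, Finset.mul_sum]
              rw [Finset.sum_comm]
              exact Finset.sum_congr rfl fun k _ => Finset.sum_congr rfl fun x _ => by ring
          _ ≤ _ := Finset.sum_le_sum fun k _ => mul_le_mul_of_nonneg_left
              (Finset.le_sup' (fun i => ∑ x, A i x * F.M k x) (Finset.mem_univ i)) (hp0 j k)
    _ = ∑ k, φ k := by
        rw [Finset.sum_comm]
        exact Finset.sum_congr rfl fun k _ => by rw [← Finset.sum_mul, hp1 k, one_mul]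

lemma continuous_gain {d n : ℕ} (E : CEVM d) :
    Continuous fun A : Fin (n + 1) → Fin d → ℝ => gain A E := by
  unfold gain
  refine continuous_finsetSum _ fun j _ => ?_
  refine Continuous.finset_sup'_apply _ fun i _ => ?_
  fun_prop

lemma linear_apply_eq_sum {m d : ℕ} (f : (Fin m → Fin d → ℝ) →ₗ[ℝ] ℝ) (v : Fin m → Fin d → ℝ) :
    f v = ∑ j, ∑ x, f (Pi.single j (Pi.single x 1)) * v j x := by
  have h : v = ∑ j, ∑ x, v j x • (Pi.single j (Pi.single x 1) : Fin m → Fin d → ℝ) := by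
    ext j x
    simp [Finset.sum_apply, Pi.single_apply, ite_apply]
  conv_lhs => rw [h]
  simp [map_sum, mul_comm]

/-- The action of a post-processing matrix on `F`, linear in the matrix. The matrix is indexed with
the outcome of `F` first, so that Markov matrices form a product of standard simplices. -/
noncomputable def postMap {d : ℕ} (m : ℕ) (F : CEVM d) :
    (Fin F.m → Fin m → ℝ) →ₗ[ℝ] (Fin m → Fin d → ℝ) where
  toFun q j := ∑ k, q k j • F.M k
  map_add' q r := by ext; simp [add_mul, Finset.sum_add_distrib]
  map_smul' c q := by ext; simp [Finset.mul_sum, mul_assoc]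

/-- Only families with exactly one vector per outcome of `E` are needed. -/
lemma post_of_gain_le {d n : ℕ} {E F : CEVM d} (hn : E.m = n + 1)
    (h : ∀ A : Fin (n + 1) → Fin d → ℝ, gain A E ≤ gain A F) : E.Post F := by
  obtain ⟨m, M, hM0, hM1⟩ := E
  dsimp only at hn
  subst hn
  let K : Set (Fin F.m → Fin (n + 1) → ℝ) := Set.univ.pi fun _ => stdSimplex ℝ (Fin (n + 1))
  by_cases hmem : M ∈ postMap (n + 1) F '' K
  · obtain ⟨q, hq, hqM⟩ := hmem
    refine ⟨fun j k => q k j, fun j k => (hq k trivial).1 j, fun k => (hq k trivial).2, fun j => ?_⟩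
    exact (congrFun hqM j).symm
  exfalso
  have hKc : IsCompact K := isCompact_univ_pi fun _ => isCompact_stdSimplex ℝ _
  have hKv : Convex ℝ K := convex_pi fun _ _ => convex_stdSimplex ℝ _
  have hclosed : IsClosed (postMap (n + 1) F '' K) :=
    (hKc.image (postMap (n + 1) F).continuous_of_finiteDimensional).isClosed
  obtain ⟨f, u, hfu, huf⟩ :=
    geometric_hahn_banach_closed_point (hKv.linear_image (postMap (n + 1) F)) hclosed hmem
  let A : Fin (n + 1) → Fin d → ℝ := fun j x => f (Pi.single j (Pi.single x 1))
  have hf : ∀ v, f v = ∑ j, ∑ x, A j x * v j x := fun v => linear_apply_eq_sum f.toLinearMap v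
  have hE : f M ≤ gain A ⟨n + 1, M, hM0, hM1⟩ := by
    rw [hf]
    exact Finset.sum_le_sum fun j _ =>
      Finset.le_sup' (fun i => ∑ x, A i x * M j x) (Finset.mem_univ j)
  -- Relabelling each outcome `k` of `F` by a maximizing index attains `gain A F`.
  have hmax : ∀ k, ∃ i, Finset.univ.sup' Finset.univ_nonempty
      (fun i => ∑ x, A i x * F.M k x) = ∑ x, A i x * F.M k x := fun k => by
    obtain ⟨i, -, hi⟩ := Finset.exists_mem_eq_sup' Finset.univ_nonempty
      (fun i => ∑ x, A i x * F.M k x)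
    exact ⟨i, hi⟩
  choose i hi using hmax
  let q : Fin F.m → Fin (n + 1) → ℝ := fun k => Pi.single (i k) 1
  have hq : q ∈ K := fun k _ => single_mem_stdSimplex ℝ (i k)
  have hF : f (postMap (n + 1) F q) = gain A F := by
    rw [hf]
    calc ∑ j, ∑ x, A j x * postMap (n + 1) F q j x
        = ∑ j, ∑ k, q k j * ∑ x, A j x * F.M k x := by
          refine Finset.sum_congr rfl fun j _ => ?_
          simp only [postMap, LinearMap.coe_mk, AddHom.coe_mk, Finset.sum_apply, Pi.smul_apply,
            smul_eq_mul, Finset.mul_sum]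
          rw [Finset.sum_comm]
          exact Finset.sum_congr rfl fun k _ => Finset.sum_congr rfl fun x _ => by ring
      _ = gain A F := by
          rw [Finset.sum_comm]
          refine Finset.sum_congr rfl fun k _ => ?_
          rw [hi k]
          simp [q, Pi.single_apply]
  have h1 := hfu _ (Set.mem_image_of_mem _ hq)
  have h2 := h A
  linarith

/-- A countable family of order monotones characterizes the post-processing
order of finite-outcome measurements on the `d`-outcome classical system. -/
theorem stmt_13 (d : ℕ) (hd : 1 ≤ d) :
    ∃ f : ℕ → CEVM d → ℝ,
      ∀ M N : CEVM d, M.Post N ↔ ∀ i : ℕ, f i M ≤ f i N := by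
  obtain ⟨e, he⟩ := exists_surjective_nat (Σ n : ℕ, Fin (n + 1) → Fin d → ℚ)
  refine ⟨fun i => gain fun j x => ((e i).2 j x : ℝ), fun M N => ⟨fun h i => gain_mono _ h,
    fun h => ?_⟩⟩
  -- Since `d ≥ 1`, normalization excludes measurements without outcomes.
  have hm : M.m ≠ 0 := by
    intro h0
    have : IsEmpty (Fin M.m) := by rw [h0]; infer_instance
    simpa using M.total ⟨0, hd⟩
  obtain ⟨n, hn⟩ := Nat.exists_eq_succ_of_ne_zero hm
  refine post_of_gain_le hn fun A => ?_
  have hdense : DenseRange (Pi.map fun _ => Pi.map fun _ => ((↑) : ℚ → ℝ) :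
      (Fin (n + 1) → Fin d → ℚ) → Fin (n + 1) → Fin d → ℝ) :=
    DenseRange.piMap fun _ => DenseRange.piMap fun _ => Rat.denseRange_cast
  refine hdense.induction_on A (isClosed_le (continuous_gain M) (continuous_gain N)) fun a => ?_
  obtain ⟨i, hi⟩ := he ⟨n, a⟩
  have := h i
  beta_reduce at this
  rw [hi] at this
  exact this
end

section
/- Fix d : ℕ with d ≥ 2. For every n : ℕ, there is no family R : Fin n → (POVM → POVM → Prop) of total preorders on the set of finite-outcome POVMs on ℂ^d (each R i reflexive, transitive, and total) such that for all POVMs M, N: M ≼post N ↔ ∀ i, R i M N. In particular, the order dimension of the quantum post-processing order of finite-outcome measurements on a d-dimensional quantum system (d ≥ 2) is infinite. -/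
/-!
The proof embeds arbitrarily large standard examples into the post-processing order.

A family `a i`, `b i` (`i : Fin (n + 1)`) with `a i ≤ b j ↔ i ≠ j` cannot be realized by `n` total
preorders: some `R k` must reverse each pair `(a i, b i)`, by pigeonhole one `R k` reverses two of
them, say `i ≠ j`, and then `a i ≤ b j ≤ a j ≤ b i` in `R k` (`not_realizer_of_standard_example`).

For POVMs the example is made of diagonal measurements with at most two distinct diagonal entries,
i.e. of points in the unit square. Let `L = n + 2` and let `v x = (x / L, (x / L) ^ 2)`, a point of
the parabola. `a i` is the binary measurement with effects `v (i + 1)` and `1 - v (i + 1)`;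
`b j` has as effects the successive differences of the chain `v 0, v 1, …, v L` from which
`v (j + 1)` is omitted. If `i ≠ j`, then `v (i + 1)` is a partial sum of these effects, so `a i` is
a coarse-graining of `b j`. On the other hand `v (j + 1)` is outside the zonotope
`{∑ t k • w k | 0 ≤ t k ≤ 1}` spanned by the effects `w k` of `b j`, because the tangent functional
`y L² - 2 (j + 1) x L` at `v (j + 1)` takes the value `-(j + 1)²` there, while it is at least
`1 - (j + 1)²` on the zonotope.
-/

open scoped ComplexOrder

/-- A finite-outcome POVM on `ℂ^d`. -/
structure POVM (d : ℕ) where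
  m : ℕ
  M : Fin m → Matrix (Fin d) (Fin d) ℂ
  posSemidef : ∀ k, (M k).PosSemidef
  total : ∑ k, M k = 1

/-- The quantum post-processing relation on finite-outcome POVMs on `ℂ^d`. -/
def POVM.Post {d : ℕ} (E F : POVM d) : Prop :=
  ∃ p : Fin E.m → Fin F.m → ℝ,
    (∀ j k, 0 ≤ p j k) ∧ (∀ k, ∑ j, p j k = 1) ∧
    ∀ j, E.M j = ∑ k, (p j k : ℂ) • F.M k

/-- Total preorders realizing a relation `S` that contains a standard example of size `n + 1` are
more than `n` in number. -/
lemma not_realizer_of_standard_example {α : Type*} (S : α → α → Prop) (n : ℕ)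
    (a b : Fin (n + 1) → α) (h1 : ∀ i j, i ≠ j → S (a i) (b j)) (h2 : ∀ i, ¬ S (a i) (b i)) :
    ¬ ∃ R : Fin n → α → α → Prop,
      (∀ i, (∀ x, R i x x) ∧ (∀ x y z, R i x y → R i y z → R i x z) ∧
        (∀ x y, R i x y ∨ R i y x)) ∧
      (∀ x y, S x y ↔ ∀ i, R i x y) := by
  rintro ⟨R, hR, hS⟩
  have h3 : ∀ i, ∃ k, ¬ R k (a i) (b i) := fun i => by
    have := h2 i
    rw [hS] at this
    exact not_forall.mp this
  choose f hf using h3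
  obtain ⟨i, j, hij, hfij⟩ := Fintype.exists_ne_map_eq_of_card_lt f (by simp)
  obtain ⟨-, htrans, htot⟩ := hR (f i)
  have hji : R (f i) (b j) (a j) := (htot _ _).resolve_left (hfij ▸ hf j)
  exact hf i (htrans _ _ _ ((hS _ _).1 (h1 i j hij) (f i))
    (htrans _ _ _ hji ((hS _ _).1 (h1 j i hij.symm) (f i))))

/-- The partial sums of a telescoping chain, written as a sum over all its steps. -/
lemma sum_ite_telescope {A : Type*} [AddCommGroup A] (f : ℕ → A) {L i : ℕ} (h : i ≤ L) :
    ∑ k : Fin L, (if (k : ℕ) < i then f (k + 1) - f k else 0) = f i - f 0 := by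
  rw [Fin.sum_univ_eq_sum_range (fun k => if k < i then f (k + 1) - f k else 0) L,
    ← Finset.sum_filter, ← Finset.sum_range_sub f i]
  congr 1
  ext k
  simp only [Finset.mem_filter, Finset.mem_range]
  omega

/-- The point `(x / L, (x / L) ^ 2)` of the parabola as a diagonal matrix: the first coordinate is
the entry at index `0`, the second one is repeated at all other indices. -/
noncomputable def parab (d L : ℕ) (x : ℝ) : Matrix (Fin d) (Fin d) ℂ :=
  Matrix.diagonal fun i => (((if (i : ℕ) = 0 then x / L else (x / L) ^ 2) : ℝ) : ℂ)

lemma parab_zero (d L : ℕ) : parab d L 0 = 0 := by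
  simp [parab]

lemma parab_self (d : ℕ) {L : ℕ} (hL : L ≠ 0) : parab d L L = 1 := by
  have : (L : ℝ) ≠ 0 := by exact_mod_cast hL
  simp [parab, div_self this]

lemma parab_sub_posSemidef (d L : ℕ) {x y : ℝ} (hx : 0 ≤ x) (hxy : x ≤ y) :
    (parab d L y - parab d L x).PosSemidef := by
  rw [parab, parab, Matrix.diagonal_sub]
  refine Matrix.PosSemidef.diagonal fun i => ?_
  rw [Pi.zero_apply, ← Complex.ofReal_sub]
  refine Complex.zero_le_real.2 (sub_nonneg.2 ?_)
  split_ifs <;> gcongr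

/-- The binary measurement with effects `v x` and `1 - v x`, where `v x` is the point of the
parabola with parameter `x`. -/
noncomputable def binPOVM (d L : ℕ) (hL : L ≠ 0) (x : ℝ) (h0 : 0 ≤ x) (h1 : x ≤ L) : POVM d where
  m := 2
  M := ![parab d L x, 1 - parab d L x]
  posSemidef k := by
    fin_cases k
    · simpa [parab_zero] using parab_sub_posSemidef d L le_rfl h0
    · simpa [parab_self d hL] using parab_sub_posSemidef d L h0 h1
  total := by simp

/-- The `L`-outcome measurement whose effects are the successive differences of the points of the
parabola with parameters `u 0 ≤ u 1 ≤ ⋯ ≤ u L`. -/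
noncomputable def chainPOVM (d L : ℕ) (hL : L ≠ 0) (u : ℕ → ℝ) (hu : Monotone u) (h0 : u 0 = 0)
    (h1 : u L = L) : POVM d where
  m := L
  M k := parab d L (u (k + 1)) - parab d L (u k)
  posSemidef k := parab_sub_posSemidef d L (h0 ▸ hu (Nat.zero_le _)) (hu (Nat.le_succ _))
  total := by
    have := sum_ite_telescope (fun k => parab d L (u k)) (le_refl L)
    simpa [h0, h1, parab_zero, parab_self d hL] using this

/-- A point of the chain gives a coarse-graining of the chain measurement: the steps before it are
merged into one outcome, the remaining steps into the other. -/
lemma binPOVM_post_chainPOVM (d L : ℕ) (hL : L ≠ 0) (u : ℕ → ℝ) (hu : Monotone u) (h0 : u 0 = 0)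
    (h1 : u L = L) (x : ℝ) (hx0 : 0 ≤ x) (hx1 : x ≤ L) (i : ℕ) (hi : i ≤ L) (hxi : u i = x) :
    (binPOVM d L hL x hx0 hx1).Post (chainPOVM d L hL u hu h0 h1) := by
  have key : ∑ k : Fin L, (if (k : ℕ) < i then
      parab d L (u (k + 1)) - parab d L (u k) else 0) = parab d L x := by
    have := sum_ite_telescope (fun k => parab d L (u k)) hi
    simpa [h0, hxi, parab_zero] using this
  refine ⟨fun j (k : Fin L) => (![if (k : ℕ) < i then 1 else 0,
      1 - if (k : ℕ) < i then 1 else 0] : Fin 2 → ℝ) j, ?_, ?_, ?_⟩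
  · intro j k
    change Fin 2 at j
    fin_cases j <;> simp <;> split_ifs <;> simp
  · intro k
    change ∑ j : Fin 2, _ = _
    simp
  · intro j
    have htot := (chainPOVM d L hL u hu h0 h1).total
    change ∑ k : Fin L, (parab d L (u (k + 1)) - parab d L (u k)) = 1 at htot
    change Fin 2 at j
    change _ = ∑ k : Fin L, _ • (parab d L (u (k + 1)) - parab d L (u k))
    fin_cases j
    · change parab d L x = _
      rw [← key]
      refine Finset.sum_congr rfl fun k _ => ?_
      by_cases h : (k : ℕ) < i <;> simp [h]
    · change 1 - parab d L x = _
      rw [← key, ← htot, ← Finset.sum_sub_distrib]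
      refine Finset.sum_congr rfl fun k _ => ?_
      by_cases h : (k : ℕ) < i <;> simp [h]

/-- The chain `0, 1, 2, …` from which `j` is omitted; it is replaced by a repetition of `j + 1`,
so that the other terms keep their index. -/
noncomputable def skip (j k : ℕ) : ℝ := if k = j then (j : ℝ) + 1 else k

lemma skip_mono (j : ℕ) : Monotone (skip j) := by
  refine monotone_nat_of_le_succ fun k => ?_
  unfold skip
  split_ifs with h1 h2 h2
  · omega
  · simp [h1]
  · have : (j : ℝ) = k + 1 := by exact_mod_cast h2.symm
    linarith
  · push_cast; linarith

/-- The omitted point is separated from the zonotope of the chain by the tangent functional of the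
parabola at that point. -/
lemma skip_separation (L j : ℕ) (hj0 : j ≠ 0) (hj : j ≤ L) (t : Fin L → ℝ) (ht0 : ∀ k, 0 ≤ t k)
    (ht1 : ∀ k, t k ≤ 1) (hx : (j : ℝ) = ∑ k : Fin L, t k * (skip j (k + 1) - skip j k))
    (hy : (j : ℝ) ^ 2 = ∑ k : Fin L, t k * (skip j (k + 1) ^ 2 - skip j k ^ 2)) : False := by
  set g : ℕ → ℝ := fun k => skip j k ^ 2 - 2 * j * skip j k with hg
  have hsum : ∑ k : Fin L, t k * (g (k + 1) - g k) = (j : ℝ) ^ 2 - 2 * j * j := by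
    nth_rewrite 3 [hx]
    rw [hy, Finset.mul_sum, ← Finset.sum_sub_distrib]
    refine Finset.sum_congr rfl fun k _ => ?_
    simp only [hg]; ring
  -- along the chain the functional does not increase up to index `j` nor decrease after it,
  -- so its minimum over the zonotope is attained at the partial sum up to `j`
  have hle : ∑ k : Fin L, (if (k : ℕ) < j then g (k + 1) - g k else 0)
      ≤ ∑ k : Fin L, t k * (g (k + 1) - g k) := by
    refine Finset.sum_le_sum fun k _ => ?_
    have h0 := ht0 k
    have h1 := ht1 k
    split_ifs with hk
    · have : g (k + 1) - g k ≤ 0 := by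
        by_cases hk' : (k : ℕ) + 1 = j
        · have : (j : ℝ) = k + 1 := by exact_mod_cast hk'.symm
          simp only [hg, skip, if_pos hk', if_neg hk.ne, this]
          apply le_of_eq; ring
        · have : (k : ℝ) + 2 ≤ j := by exact_mod_cast (by omega : (k : ℕ) + 2 ≤ j)
          simp only [hg, skip, if_neg hk', if_neg hk.ne]
          push_cast; nlinarith
      nlinarith
    · refine mul_nonneg h0 ?_
      have hk' : (k : ℕ) + 1 ≠ j := by omega
      by_cases hk2 : (k : ℕ) = j
      · have : (k : ℝ) = j := by exact_mod_cast hk2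
        simp only [hg, skip, if_pos hk2, if_neg hk']
        push_cast; rw [this]; apply le_of_eq; ring
      · have : (j : ℝ) + 1 ≤ k := by exact_mod_cast (by omega : j + 1 ≤ (k : ℕ))
        simp only [hg, skip, if_neg hk2, if_neg hk']
        push_cast; nlinarith
  rw [hsum, sum_ite_telescope g hj] at hle
  have e1 : g j = (j + 1 : ℝ) ^ 2 - 2 * j * (j + 1) := by simp [hg, skip]
  have e2 : g 0 = 0 := by simp [hg, skip, hj0.symm]
  rw [e1, e2] at hle
  nlinarith

lemma not_binPOVM_post_chainPOVM (d L : ℕ) (hd : 2 ≤ d) (hL : L ≠ 0) (j : ℕ) (hj0 : j ≠ 0)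
    (hj : j ≤ L) (h0 : skip j 0 = 0) (h1 : skip j L = L) (hx0 : (0 : ℝ) ≤ j)
    (hx1 : (j : ℝ) ≤ L) :
    ¬ (binPOVM d L hL j hx0 hx1).Post (chainPOVM d L hL (skip j) (skip_mono j) h0 h1) := by
  rintro ⟨p, hp0, hp1, hp⟩
  change Fin 2 → Fin L → ℝ at p
  have hL' : (L : ℝ) ≠ 0 := by exact_mod_cast hL
  have hM : parab d L j =
      ∑ k : Fin L, (p 0 k : ℂ) • (parab d L (skip j (k + 1)) - parab d L (skip j k)) :=
    hp (0 : Fin 2)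
  have hle : ∀ k, p 0 k ≤ 1 := fun k => by
    have h : ∑ i : Fin 2, p i k = 1 := hp1 k
    have h' : 0 ≤ p 1 k := hp0 (1 : Fin 2) k
    rw [Fin.sum_univ_two] at h
    linarith
  refine skip_separation L j hj0 hj (p 0) (hp0 (0 : Fin 2)) hle ?_ ?_
  · have e := congrArg (fun A => (A ⟨0, by omega⟩ ⟨0, by omega⟩ : ℂ)) hM
    simp only [parab, Matrix.sum_apply, Matrix.smul_apply, Matrix.sub_apply,
      Matrix.diagonal_apply_eq, smul_eq_mul, if_true] at e
    simp only [← Complex.ofReal_sub, ← Complex.ofReal_mul, ← Complex.ofReal_sum,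
      Complex.ofReal_inj] at e
    rw [div_eq_iff hL', Finset.sum_mul] at e
    rw [e]
    refine Finset.sum_congr rfl fun k _ => ?_
    field_simp
  · have e := congrArg (fun A => (A ⟨1, by omega⟩ ⟨1, by omega⟩ : ℂ)) hM
    simp only [parab, Matrix.sum_apply, Matrix.smul_apply, Matrix.sub_apply,
      Matrix.diagonal_apply_eq, smul_eq_mul, one_ne_zero, if_false] at e
    simp only [← Complex.ofReal_sub, ← Complex.ofReal_mul, ← Complex.ofReal_sum,
      Complex.ofReal_inj] at e
    rw [div_pow, div_eq_iff (pow_ne_zero 2 hL'), Finset.sum_mul] at e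
    rw [e]
    refine Finset.sum_congr rfl fun k _ => ?_
    field_simp

/-- For `d ≥ 2`, no finite family of total preorders realizes the quantum
post-processing order of finite-outcome POVMs on `ℂ^d`: its order dimension
is infinite. -/
theorem stmt_16 (d : ℕ) (hd : 2 ≤ d) (n : ℕ) :
    ¬ ∃ R : Fin n → POVM d → POVM d → Prop,
      (∀ i, (∀ x, R i x x) ∧
        (∀ x y z, R i x y → R i y z → R i x z) ∧
        (∀ x y, R i x y ∨ R i y x)) ∧
      (∀ M N : POVM d, M.Post N ↔ ∀ i, R i M N) := by
  have hL : n + 2 ≠ 0 := by omega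
  have hx0 : ∀ i : Fin (n + 1), (0 : ℝ) ≤ ((i + 1 : ℕ) : ℝ) := fun i => Nat.cast_nonneg _
  have hx1 : ∀ i : Fin (n + 1), ((i + 1 : ℕ) : ℝ) ≤ ((n + 2 : ℕ) : ℝ) := fun i => by
    exact_mod_cast (by omega : (i : ℕ) + 1 ≤ n + 2)
  have h0 : ∀ i : Fin (n + 1), skip (i + 1) 0 = 0 := fun i => by simp [skip]
  have h1 : ∀ i : Fin (n + 1), skip (i + 1) (n + 2) = ((n + 2 : ℕ) : ℝ) := fun i => by
    rw [skip, if_neg (by omega)]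
  refine not_realizer_of_standard_example POVM.Post n
    (fun i => binPOVM d (n + 2) hL ((i + 1 : ℕ) : ℝ) (hx0 i) (hx1 i))
    (fun i => chainPOVM d (n + 2) hL (skip (i + 1)) (skip_mono _) (h0 i) (h1 i)) ?_ ?_
  · intro i j hij
    refine binPOVM_post_chainPOVM d (n + 2) hL _ _ _ _ _ _ _ (i + 1) (by omega) ?_
    have : (i : ℕ) ≠ j := fun h => hij (Fin.ext h)
    rw [skip, if_neg (by omega)]
  · intro i
    exact not_binPOVM_post_chainPOVM d (n + 2) hd hL (i + 1) (by omega) (by omega) _ _ _ _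
end

section
/- Fix d : ℕ with d ≥ 1. There exists a countable family f : ℕ → (POVM → ℝ) of real-valued functions on the set of finite-outcome POVMs on ℂ^d such that for all POVMs M, N: M ≼post N ↔ ∀ i : ℕ, f i M ≤ f i N. -/
/-!
For each `n`, let `reach N n` be the set of `n`-tuples of matrices obtained from `N` by a Markov
matrix with `n` outputs. It is the continuous image of the compact set of Markov matrices, hence
closed, and it grows along the post-processing order because Markov matrices compose
(`POVM.reach_mono`). The monotones are `N ↦ -dist(x, reach N n)`, with `n ≥ 1` and `x` ranging over
a countable dense set of `n`-tuples of matrices. If all of them are at least as large on `N` as on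
`M`, then by continuity in `x` the same holds for every `x`. Taking `n` to be the number of outcomes
of `M` and `x = M`, whose distance to `reach M n` is zero, yields `dist(M, reach N n) = 0`, so that
`M` lies in the closed set `reach N n`, i.e. `M` is a post-processing of `N`.
-/

open scoped ComplexOrder

/-- Markov matrices with input set `Fin m` and output set `Fin n`: `p j k` is the probability of
the output `j` given the input `k`. -/
def markovSet (n m : ℕ) : Set (Fin n → Fin m → ℝ) :=
  {p | (∀ j k, 0 ≤ p j k) ∧ ∀ k, ∑ j, p j k = 1}

/-- The tuple obtained by mixing the effects of `N` with the weights `p`. Matrices are treated as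
plain functions so that tuples carry the sup metric. -/
noncomputable def POVM.mix {d : ℕ} (N : POVM d) (n : ℕ) (p : Fin n → Fin N.m → ℝ) :
    Fin n → Fin d → Fin d → ℂ :=
  fun j a b => ∑ k, (p j k : ℂ) * N.M k a b

/-- The `n`-outcome post-processings of `N`, as a subset of the metric space of tuples. -/
def POVM.reach {d : ℕ} (N : POVM d) (n : ℕ) : Set (Fin n → Fin d → Fin d → ℂ) :=
  N.mix n '' markovSet n N.m

theorem isCompact_markovSet (n m : ℕ) : IsCompact (markovSet n m) := by
  have hcube : IsCompact (Set.Icc (0 : Fin n → Fin m → ℝ) 1) := isCompact_Icc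
  refine hcube.of_isClosed_subset ?_ ?_
  · have h : markovSet n m =
        (⋂ j, ⋂ k, {p | 0 ≤ p j k}) ∩ ⋂ k, {p | ∑ j, p j k = 1} := by
      ext p
      simp [markovSet]
    rw [h]
    refine IsClosed.inter ?_ ?_
    · exact isClosed_iInter fun j => isClosed_iInter fun k =>
        isClosed_le continuous_const (by fun_prop)
    · exact isClosed_iInter fun k => isClosed_eq (by fun_prop) continuous_const
  · rintro p ⟨h0, h1⟩
    refine ⟨fun j k => h0 j k, fun j k => ?_⟩
    change p j k ≤ 1
    rw [← h1 k]
    exact Finset.single_le_sum (f := fun i => p i k) (fun i _ => h0 i k) (Finset.mem_univ j)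

theorem markovSet_nonempty (n m : ℕ) : (markovSet (n + 1) m).Nonempty := by
  refine ⟨fun j _ => if j = 0 then 1 else 0, fun j k => ?_, fun k => by simp⟩
  dsimp only
  split_ifs <;> norm_num

theorem POVM.continuous_mix {d : ℕ} (N : POVM d) (n : ℕ) : Continuous (N.mix n) := by
  unfold POVM.mix
  fun_prop

theorem POVM.isClosed_reach {d : ℕ} (N : POVM d) (n : ℕ) : IsClosed (N.reach n) :=
  ((isCompact_markovSet n N.m).image (N.continuous_mix n)).isClosed

theorem POVM.reach_nonempty {d : ℕ} (N : POVM d) (n : ℕ) : (N.reach (n + 1)).Nonempty :=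
  (markovSet_nonempty n N.m).image _

theorem POVM.post_iff_mem_reach {d : ℕ} (M N : POVM d) : M.Post N ↔ (fun j a b => M.M j a b) ∈ N.reach M.m := by
  constructor
  · rintro ⟨p, h0, h1, h⟩
    refine ⟨p, ⟨h0, h1⟩, ?_⟩
    funext j a b
    rw [h j]
    simp [POVM.mix, Matrix.sum_apply]
  · rintro ⟨p, ⟨h0, h1⟩, h⟩
    refine ⟨p, h0, h1, fun j => ?_⟩
    ext a b
    rw [← congrFun₃ h j a b]
    simp [POVM.mix, Matrix.sum_apply]

theorem POVM.mem_reach_self {d : ℕ} (M : POVM d) : (fun j a b => M.M j a b) ∈ M.reach M.m := by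
  refine ⟨fun j k => if j = k then 1 else 0, ⟨fun j k => ?_, fun k => by simp⟩, ?_⟩
  · dsimp only
    split_ifs <;> norm_num
  · funext j a b
    simp [POVM.mix, apply_ite Complex.ofReal, ite_mul]

/-- Transitivity of post-processing: if `M` arises from `N` via `p`, then applying `q` to `M`
amounts to applying the matrix product of `q` and `p` to `N`. -/
theorem POVM.reach_mono {d : ℕ} {M N : POVM d} (h : M.Post N) (n : ℕ) :
    M.reach n ⊆ N.reach n := by
  obtain ⟨p, p0, p1, hp⟩ := h
  rintro _ ⟨q, ⟨q0, q1⟩, rfl⟩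
  refine ⟨fun j k => ∑ l, q j l * p l k, ⟨fun j k => ?_, fun k => ?_⟩, ?_⟩
  · exact Finset.sum_nonneg fun l _ => mul_nonneg (q0 j l) (p0 l k)
  · rw [Finset.sum_comm]
    simp_rw [← Finset.sum_mul, q1, one_mul, p1]
  · funext j a b
    simp only [POVM.mix, hp, Matrix.sum_apply, Matrix.smul_apply, smul_eq_mul, Complex.ofReal_sum,
      Complex.ofReal_mul, Finset.mul_sum, Finset.sum_mul]
    rw [Finset.sum_comm]
    simp only [mul_assoc]

/-- Minus the distance from `reach N (n + 1)` to the `k`-th point of a dense sequence of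
`(n + 1)`-tuples of matrices. At least one output is required, since the set `reach N 0` may be
empty and `Metric.infDist` to the empty set is the junk value `0`. -/
noncomputable def POVM.negDist {d : ℕ} (n k : ℕ) (N : POVM d) : ℝ :=
  -Metric.infDist (TopologicalSpace.denseSeq (Fin (n + 1) → Fin d → Fin d → ℂ) k) (N.reach (n + 1))

/-- In positive dimension the identity is not an empty sum, so a POVM has an outcome. -/
theorem POVM.m_ne_zero {d : ℕ} (hd : 1 ≤ d) (M : POVM d) : M.m ≠ 0 := by
  intro h
  have : IsEmpty (Fin M.m) := by rw [h]; infer_instance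
  have : Nonempty (Fin d) := ⟨⟨0, hd⟩⟩
  have ht := M.total
  rw [Finset.univ_eq_empty, Finset.sum_empty] at ht
  exact zero_ne_one ht

/-- A countable family of order monotones characterizes the quantum
post-processing order of finite-outcome POVMs on `ℂ^d`. -/
theorem stmt_18 (d : ℕ) (hd : 1 ≤ d) :
    ∃ f : ℕ → POVM d → ℝ,
      ∀ M N : POVM d, M.Post N ↔ ∀ i : ℕ, f i M ≤ f i N := by
  refine ⟨fun i => POVM.negDist i.unpair.1 i.unpair.2, fun M N => ⟨fun h i => ?_, fun h => ?_⟩⟩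
  · exact neg_le_neg (Metric.infDist_le_infDist_of_subset (POVM.reach_mono h _)
      (M.reach_nonempty _))
  · have key : ∀ (n : ℕ) (x : Fin (n + 1) → Fin d → Fin d → ℂ),
        Metric.infDist x (N.reach (n + 1)) ≤ Metric.infDist x (M.reach (n + 1)) := by
      intro n x
      have hcl : IsClosed {x : Fin (n + 1) → Fin d → Fin d → ℂ |
          Metric.infDist x (N.reach (n + 1)) ≤ Metric.infDist x (M.reach (n + 1))} :=
        isClosed_le (Metric.continuous_infDist_pt _) (Metric.continuous_infDist_pt _)
      refine (TopologicalSpace.denseRange_denseSeq _).induction_on x hcl fun k => ?_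
      have hk := h (Nat.pair n k)
      simp only [Nat.unpair_pair] at hk
      exact neg_le_neg_iff.mp hk
    have hsub : ∀ n, n ≠ 0 → M.reach n ⊆ N.reach n := by
      intro n hn x hx
      obtain ⟨n, rfl⟩ := Nat.exists_eq_succ_of_ne_zero hn
      rw [(N.isClosed_reach _).mem_iff_infDist_zero (N.reach_nonempty n)]
      exact le_antisymm ((key n x).trans_eq (Metric.infDist_zero_of_mem hx)) Metric.infDist_nonneg
    exact (POVM.post_iff_mem_reach M N).mpr (hsub _ (M.m_ne_zero hd) M.mem_reach_self)
end
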